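/- Let D be a domain in ℂ and let M be a free maximal ideal of H(D). If f ∈ ki(M) := ⋂_{n=1}^∞ Mⁿ and f ≠ 0, then sup_{ζ ∈ Z_D(f)} ord(f,ζ) = ∞, i.e., for every n ∈ ℕ there exists ζ ∈ Z_D(f) with ord(f,ζ) ≥ n. -/

import Mathlib

set_option synthInstance.maxHeartbeats 400000
set_option maxHeartbeats 800000

/-- The Krull intersection of an ideal `I`: the intersection `⋂_{n=1}^∞ Iⁿ`. -/
def ki {R : Type*} [CommRing R] (I : Ideal R) : Ideal R :=
  ⨅ (n : ℕ) (_ : 1 ≤ n), I ^ n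

/-- The ring `H(D)` of holomorphic functions on a set `D ⊆ ℂ`, realized as the subalgebra of
`D → ℂ` (with pointwise operations) of functions admitting a holomorphic (complex
differentiable) extension to (an ambient function on) `D`. -/
def Hol (D : Set ℂ) : Subalgebra ℂ (D → ℂ) where
  carrier := {f | ∃ F : ℂ → ℂ, DifferentiableOn ℂ F D ∧ ∀ z : D, F z = f z}
  add_mem' := by
    rintro f g ⟨F, hF, hFf⟩ ⟨G, hG, hGg⟩
    exact ⟨F + G, hF.add hG, fun z => by simp [hFf z, hGg z]⟩
  mul_mem' := by
    rintro f g ⟨F, hF, hFf⟩ ⟨G, hG, hGg⟩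
    exact ⟨F * G, hF.mul hG, fun z => by simp [hFf z, hGg z]⟩
  algebraMap_mem' := fun c => ⟨fun _ => c, differentiableOn_const c, fun _ => rfl⟩

/-- The zero set `Z_D(f) = {z ∈ D : f(z) = 0}` of `f ∈ H(D)`. -/
def ZD {D : Set ℂ} (f : Hol D) : Set D := {z | (f : D → ℂ) z = 0}

/-- `ordGE f ζ n` says that the order (multiplicity) of `ζ` as a zero of `f ∈ H(D)` is at
least `n`, expressed by the (equivalent, for `D` open) divisibility condition that
`(z - ζ)^n` divides `f` in `H(D)`. -/
def ordGE {D : Set ℂ} (f : Hol D) (ζ : D) (n : ℕ) : Prop :=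
  ∃ g : Hol D, ∀ z : D, (f : D → ℂ) z = ((z : ℂ) - (ζ : ℂ)) ^ n * (g : D → ℂ) z


open Set Filter Topology

/-- Compact exhaustion of `D`. -/
def KK (D : Set ℂ) (m : ℕ) : Set ℂ :=
  {z | ‖z‖ ≤ m ∧ ∀ b, b ∉ D → 1 ≤ m * ‖z - b‖}

theorem KK_subset (D : Set ℂ) (m : ℕ) : KK D m ⊆ D := by
  intro z hz
  by_contra h
  have := hz.2 z h
  norm_num at this

theorem KK_mono (D : Set ℂ) {m k : ℕ} (h : m ≤ k) : KK D m ⊆ KK D k := by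
  intro z hz
  have h' : (m : ℝ) ≤ k := by exact_mod_cast h
  refine ⟨hz.1.trans h', fun b hb => (hz.2 b hb).trans ?_⟩
  gcongr

theorem KK_compact (D : Set ℂ) (m : ℕ) : IsCompact (KK D m) := by
  apply Metric.isCompact_of_isClosed_isBounded
  · have : KK D m = {z | ‖z‖ ≤ m} ∩ ⋂ b, ⋂ (_ : b ∉ D), {z | (1:ℝ) ≤ m * ‖z - b‖} := by
      ext z; simp [KK]
    rw [this]
    refine IsClosed.inter (isClosed_le (by fun_prop) (by fun_prop)) ?_
    refine isClosed_iInter fun b => isClosed_iInter fun _ => ?_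
    exact isClosed_le (by fun_prop) (by fun_prop)
  · refine (Metric.isBounded_closedBall (x := (0:ℂ)) (r := m)).subset ?_
    intro z hz
    simpa using hz.1

theorem KK_nhds {D : Set ℂ} (hD : IsOpen D) {z : ℂ} (hz : z ∈ D) : ∃ m, KK D m ∈ 𝓝 z := by
  obtain ⟨r, hr, hb⟩ := Metric.isOpen_iff.1 hD z hz
  obtain ⟨m, hm⟩ := exists_nat_gt (max (‖z‖ + r) (2 / r))
  have h1 : ‖z‖ + r < m := (le_max_left _ _).trans_lt hm
  have h2 : 2 / r < m := (le_max_right _ _).trans_lt hm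
  refine ⟨m, Filter.mem_of_superset (Metric.ball_mem_nhds z (half_pos hr)) ?_⟩
  intro w hw
  rw [Metric.mem_ball, dist_eq_norm] at hw
  constructor
  · have : ‖w‖ ≤ ‖w - z‖ + ‖z‖ := by simpa using norm_add_le (w - z) z
    linarith
  · intro b hbD
    have h3 : r ≤ ‖b - z‖ := by
      by_contra h
      exact hbD (hb (by rw [Metric.mem_ball, dist_eq_norm]; linarith))
    have h4 : ‖b - z‖ ≤ ‖w - b‖ + ‖w - z‖ := by
      have := norm_sub_le (w - z) (w - b)
      simp only [sub_sub_sub_cancel_left] at this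
      linarith
    have h5 : r / 2 ≤ ‖w - b‖ := by linarith
    rw [div_lt_iff₀ hr] at h2
    have : (m : ℝ) * (r / 2) ≤ m * ‖w - b‖ := by gcongr
    linarith

/-- Restrictions of holomorphic functions on `D` to a subset. -/
def restrAlg (D K : Set ℂ) : Subalgebra ℂ C(K, ℂ) where
  carrier := {φ | ∃ F : ℂ → ℂ, DifferentiableOn ℂ F D ∧ ∀ z : K, F z = φ z}
  add_mem' := by
    rintro f g ⟨F, hF, hFf⟩ ⟨G, hG, hGg⟩
    exact ⟨F + G, hF.add hG, fun z => by simp [hFf z, hGg z]⟩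
  mul_mem' := by
    rintro f g ⟨F, hF, hFf⟩ ⟨G, hG, hGg⟩
    exact ⟨F * G, hF.mul hG, fun z => by simp [hFf z, hGg z]⟩
  algebraMap_mem' := fun c => ⟨fun _ => c, differentiableOn_const c, fun _ => rfl⟩

theorem geom_mem {K : Set ℂ} [CompactSpace K] (A : Subalgebra ℂ C(K, ℂ)) (hA : IsClosed (A : Set C(K, ℂ)))
    (w : C(K, ℂ)) (hw : w ∈ A) (hn : ∀ z, ‖w z‖ ≤ 1 / 2) :
    ∃ S ∈ A, ∀ z, S z = (1 - w z)⁻¹ := by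
  have hlt : ‖w‖ < 1 := by
    have : ‖w‖ ≤ 1 / 2 := (ContinuousMap.norm_le w (by norm_num)).2 hn
    linarith
  refine ⟨∑' i : ℕ, w ^ i, ?_, ?_⟩
  · have hs := (summable_geometric_of_norm_lt_one hlt).hasSum
    exact hA.mem_of_tendsto hs (Filter.Eventually.of_forall fun s => A.sum_mem fun i _ => A.pow_mem hw i)
  · intro z
    have h := mul_neg_geom_series w hlt
    have h2 := congrArg (fun φ : C(K, ℂ) => φ z) h
    simp only [ContinuousMap.mul_apply, ContinuousMap.sub_apply, ContinuousMap.one_apply] at h2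
    exact eq_inv_of_mul_eq_one_right h2

theorem inv_mem {D : Set ℂ} (m : ℕ) (ζ : ℂ) (hζ : ζ ∉ KK D (2 * m)) [CompactSpace (KK D m)] :
    ∃ S ∈ (restrAlg D (KK D m)).topologicalClosure, ∀ z, S z = ((z : ℂ) - ζ)⁻¹ := by
  set A := (restrAlg D (KK D m)).topologicalClosure with hAdef
  have hA : IsClosed (A : Set C(KK D m, ℂ)) := Subalgebra.isClosed_topologicalClosure _
  have hle : restrAlg D (KK D m) ≤ A := Subalgebra.le_topologicalClosure _
  by_cases h1 : ‖ζ‖ ≤ ((2 * m : ℕ) : ℝ)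
  · have : ∃ b, b ∉ D ∧ ((2 * m : ℕ) : ℝ) * ‖ζ - b‖ < 1 := by
      by_contra hcon
      push Not at hcon
      exact hζ ⟨h1, hcon⟩
    obtain ⟨b, hbD, hb⟩ := this
    push_cast at hb
    have hne : ∀ z : KK D m, (z : ℂ) - b ≠ 0 := by
      intro z h
      have := z.2.2 b hbD
      rw [h] at this
      norm_num at this
    let v : C(KK D m, ℂ) := ⟨fun z => ((z : ℂ) - b)⁻¹, by
      apply Continuous.inv₀ (by fun_prop) hne⟩
    have hv : v ∈ A := by
      apply hle
      refine ⟨fun z => (z - b)⁻¹, ?_, fun z => rfl⟩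
      refine DifferentiableOn.inv (by fun_prop) ?_
      intro x hx h
      exact hbD (by rw [← sub_eq_zero.1 h]; exact hx)
    have hw : (ζ - b) • v ∈ A := A.smul_mem hv _
    obtain ⟨S, hS, hSz⟩ := geom_mem A hA _ hw (by
      intro z
      have h2 := z.2.2 b hbD
      have hp : 0 < ‖(z:ℂ) - b‖ := norm_pos_iff.2 (hne z)
      simp only [v, ContinuousMap.smul_apply, ContinuousMap.coe_mk, smul_eq_mul, norm_mul, norm_inv]
      rw [← div_eq_mul_inv, div_le_iff₀ hp]
      have hm : 0 < (m:ℝ) := by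
        by_contra hm
        have : (m:ℝ) = 0 := le_antisymm (not_lt.1 hm) (by positivity)
        rw [this] at h2; norm_num at h2
      by_contra hcon
      push Not at hcon
      have := mul_lt_mul_of_pos_left hcon hm
      linarith)
    refine ⟨v * S, A.mul_mem hv hS, fun z => ?_⟩
    rw [ContinuousMap.mul_apply, hSz]
    simp only [v, ContinuousMap.smul_apply, ContinuousMap.coe_mk, smul_eq_mul]
    rw [← mul_inv, mul_sub, mul_one, mul_left_comm, mul_inv_cancel₀ (hne z)]
    congr 1; ring
  · push Not at h1
    push_cast at h1
    have hpos : 0 < ‖ζ‖ := lt_of_le_of_lt (by positivity) h1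
    have hζ0 : ζ ≠ 0 := norm_pos_iff.1 hpos
    let v : C(KK D m, ℂ) := ⟨fun z => ζ⁻¹ * (z : ℂ), by fun_prop⟩
    have hv : v ∈ A := hle ⟨fun z => ζ⁻¹ * z, by fun_prop, fun z => rfl⟩
    obtain ⟨S, hS, hSz⟩ := geom_mem A hA _ hv (by
      intro z
      have h2 := z.2.1
      simp only [v, ContinuousMap.coe_mk, norm_mul, norm_inv]
      rw [inv_mul_le_iff₀ hpos]
      linarith)
    refine ⟨(-ζ⁻¹) • S, A.smul_mem hS _, fun z => ?_⟩
    rw [ContinuousMap.smul_apply, hSz, smul_eq_mul, ← inv_neg, ← mul_inv]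
    simp only [v, ContinuousMap.coe_mk]
    congr 1
    field_simp
    ring

theorem runge_aux {D : Set ℂ} (m : ℕ) (ζ : ℂ) (hζ : ζ ∉ KK D (2 * m)) (c : ℂ → ℂ)
    (hc : DifferentiableOn ℂ c D) (n : ℕ) {ε : ℝ} (hε : 0 < ε) :
    ∃ R : ℂ → ℂ, DifferentiableOn ℂ R D ∧ ∀ z ∈ KK D m, ‖c z / (z - ζ) ^ n - R z‖ ≤ ε := by
  have : CompactSpace (KK D m) := isCompact_iff_compactSpace.1 (KK_compact D m)
  obtain ⟨S, hS, hSz⟩ := inv_mem (D := D) m ζ hζ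
  let cK : C(KK D m, ℂ) := ⟨fun z => c z, by
    exact (hc.continuousOn.mono (KK_subset D m)).domRestrict⟩
  have hcK : cK ∈ (restrAlg D (KK D m)).topologicalClosure :=
    Subalgebra.le_topologicalClosure _ ⟨c, hc, fun z => rfl⟩
  have hmem := Subalgebra.mul_mem _ hcK (Subalgebra.pow_mem _ hS n)
  have hmem2 : cK * S ^ n ∈ closure ((restrAlg D (KK D m)) : Set C(KK D m, ℂ)) := hmem
  obtain ⟨φ, ⟨F, hF, hFφ⟩, hd⟩ := Metric.mem_closure_iff.1 hmem2 ε hε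
  refine ⟨F, hF, fun z hz => ?_⟩
  have := (ContinuousMap.dist_apply_le_dist (f := cK * S ^ n) (g := φ) ⟨z, hz⟩).trans hd.le
  rw [dist_eq_norm, ContinuousMap.mul_apply, ContinuousMap.pow_apply, hSz, ← hFφ] at this
  rw [inv_pow, ← div_eq_mul_inv] at this
  exact this

theorem runge {D : Set ℂ} (hD : IsOpen D) (ζ : ℂ) (hζ : ζ ∈ D) (c : ℂ → ℂ)
    (hc : DifferentiableOn ℂ c D) (n : ℕ) {ε : ℝ} (hε : 0 < ε) :
    ∃ R : ℂ → ℂ, DifferentiableOn ℂ R D ∧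
      ∀ m, ζ ∉ KK D (2 * m) → ∀ z ∈ KK D m, ‖c z / (z - ζ) ^ n - R z‖ ≤ ε := by
  classical
  have hex : ∃ N, ζ ∈ KK D N := by
    obtain ⟨m, hm⟩ := KK_nhds hD hζ
    exact ⟨m, mem_of_mem_nhds hm⟩
  by_cases h0 : Nat.find hex = 0
  · refine ⟨0, differentiableOn_const 0, fun m hm => absurd ?_ hm⟩
    have := Nat.find_spec hex
    rw [h0] at this
    exact KK_mono D (Nat.zero_le _) this
  · set N := Nat.find hex with hN
    have hnot : ζ ∉ KK D (2 * ((N - 1) / 2)) := Nat.find_min hex (by omega)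
    obtain ⟨R, hR, hR2⟩ := runge_aux _ ζ hnot c hc n hε
    refine ⟨R, hR, fun m hm z hz => hR2 z (KK_mono D ?_ hz)⟩
    have : ¬ N ≤ 2 * m := fun h => hm (KK_mono D h (Nat.find_spec hex))
    omega

theorem mittagLeffler {D : Set ℂ} (hD : IsOpen D) (Z : Set ℂ) (hZD : Z ⊆ D)
    (hfin : ∀ m : ℕ, (Z ∩ KK D m).Finite) (hcount : Z.Countable) (c : ℂ → ℂ → ℂ)
    (hc : ∀ ζ ∈ Z, DifferentiableOn ℂ (c ζ) D) (n : ℂ → ℕ) :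
    ∃ u : ℂ → ℂ, ∀ z₀ ∈ D, ∃ S : ℂ → ℂ, AnalyticAt ℂ S z₀ ∧ (z₀ ∉ Z → u =ᶠ[𝓝 z₀] S) ∧
      (z₀ ∈ Z → u =ᶠ[𝓝 z₀] fun z => c z₀ z / (z - z₀) ^ n z₀ + S z) := by
  classical
  obtain ⟨ε, hε, C, hsum, -⟩ := hcount.exists_pos_hasSum_le (ε := 1) one_pos
  choose! R hR hR2 using fun ζ (hζ : ζ ∈ Z) =>
    runge hD ζ (hZD hζ) (c ζ) (hc ζ hζ) (n ζ) (hε ζ)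
  let s : Z → ℂ → ℂ := fun ζ z => c ζ z / (z - ζ) ^ n ζ - R ζ z
  have hsan : ∀ (ζ : Z) (z : ℂ), z ∈ D → z ≠ ζ → AnalyticAt ℂ (s ζ) z := by
    intro ζ z hz hne
    have h1 : AnalyticAt ℂ (c ζ) z := (hc ζ ζ.2).analyticAt (hD.mem_nhds hz)
    have h2 : AnalyticAt ℂ (R ζ) z := (hR ζ ζ.2).analyticAt (hD.mem_nhds hz)
    have h3 : AnalyticAt ℂ (fun w : ℂ => (w - ζ) ^ n ζ) z := by fun_prop
    have h4 : (fun w : ℂ => (w - ζ) ^ n ζ) z ≠ 0 := pow_ne_zero _ (sub_ne_zero.2 hne)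
    exact (h1.fun_div h3 h4).fun_sub h2
  refine ⟨fun z => ∑' ζ : Z, s ζ z, fun z₀ hz₀ => ?_⟩
  obtain ⟨m, hm⟩ := KK_nhds hD hz₀
  have hF : {ζ : Z | (ζ : ℂ) ∈ KK D (2 * m)}.Finite := by
    refine Set.Finite.of_finite_image ((hfin (2 * m)).subset ?_) Subtype.val_injective.injOn
    rintro _ ⟨ζ, hζ, rfl⟩
    exact ⟨ζ.2, hζ⟩
  set F : Finset Z := hF.toFinset with hFdef
  have hFmem : ∀ ζ : Z, ζ ∈ F ↔ (ζ : ℂ) ∈ KK D (2 * m) := by intro ζ; simp [hFdef]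
  have hbound : ∀ ζ : Z, ζ ∉ F → ∀ z ∈ KK D m, ‖s ζ z‖ ≤ ε ζ := by
    intro ζ hζ z hz
    exact hR2 ζ ζ.2 m (by rwa [← hFmem]) z hz
  have hsumm' : ∀ z ∈ KK D m, Summable fun ζ : {ζ : Z // ζ ∉ F} => s ζ z := by
    intro z hz
    refine Summable.of_norm_bounded (g := fun ζ : {ζ : Z // ζ ∉ F} => ε ζ) ?_ ?_
    · exact hsum.summable.comp_injective (i := fun ζ : {ζ : Z // ζ ∉ F} => (ζ : Z)) Subtype.val_injective
    · intro ζ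
      exact hbound ζ ζ.2 z hz
  have hsumm : ∀ z ∈ KK D m, Summable fun ζ : Z => s ζ z := by
    intro z hz
    exact (Finset.summable_compl_iff F).1 (hsumm' z hz)
  have htail : AnalyticAt ℂ (fun z => ∑' ζ : {ζ : Z // ζ ∉ F}, s ζ z) z₀ := by
    have hd : DifferentiableOn ℂ (fun z => ∑' ζ : {ζ : Z // ζ ∉ F}, s ζ z) (interior (KK D m)) := by
      refine _root_.Complex.differentiableOn_tsum_of_summable_norm
        (u := fun ζ : {ζ : Z // ζ ∉ F} => ε ζ) ?_ ?_ isOpen_interior ?_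
      · exact hsum.summable.comp_injective (i := fun ζ : {ζ : Z // ζ ∉ F} => (ζ : Z)) Subtype.val_injective
      · intro ζ z hz
        have hz' := interior_subset hz
        refine (hsan ζ z (KK_subset D m hz') ?_).differentiableAt.differentiableWithinAt
        rintro rfl
        exact ζ.2 ((hFmem _).2 (KK_mono D (by omega) hz'))
      · intro ζ z hz
        exact hbound ζ ζ.2 z (interior_subset hz)
    exact hd.analyticAt (isOpen_interior.mem_nhds (mem_interior_iff_mem_nhds.2 hm))
  have hsplit : ∀ z ∈ KK D m, ∑' ζ : Z, s ζ z =
      ∑ ζ ∈ F, s ζ z + ∑' ζ : {ζ : Z // ζ ∉ F}, s ζ z := by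
    intro z hz
    exact ((hsumm z hz).sum_add_tsum_subtype_compl F).symm
  by_cases hz₀Z : z₀ ∈ Z
  · have hmemF : (⟨z₀, hz₀Z⟩ : Z) ∈ F :=
      (hFmem _).2 (KK_mono D (by omega) (mem_of_mem_nhds hm))
    refine ⟨fun z => (∑ ζ ∈ F.erase ⟨z₀, hz₀Z⟩, s ζ z - R z₀ z) +
      ∑' ζ : {ζ : Z // ζ ∉ F}, s ζ z, ?_, fun h => absurd hz₀Z h, fun _ => ?_⟩
    · refine AnalyticAt.add (AnalyticAt.sub ?_ ?_) htail
      · refine Finset.analyticAt_fun_sum _ fun ζ hζ => hsan ζ z₀ hz₀ ?_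
        intro h
        exact Finset.ne_of_mem_erase hζ (Subtype.ext h.symm)
      · exact (hR z₀ hz₀Z).analyticAt (hD.mem_nhds hz₀)
    · filter_upwards [hm] with z hz
      rw [hsplit z hz, ← Finset.add_sum_erase F _ hmemF]
      simp only [s]
      ring
  · refine ⟨fun z => ∑ ζ ∈ F, s ζ z + ∑' ζ : {ζ : Z // ζ ∉ F}, s ζ z, ?_, fun _ => ?_,
      fun h => absurd h hz₀Z⟩
    · refine AnalyticAt.add ?_ htail
      refine Finset.analyticAt_fun_sum _ fun ζ hζ => hsan ζ z₀ hz₀ ?_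
      rintro rfl
      exact hz₀Z ζ.2
    · filter_upwards [hm] with z hz
      exact hsplit z hz

theorem eq_of_punctured {F G : ℂ → ℂ} {z : ℂ} (hF : ContinuousAt F z) (hG : ContinuousAt G z)
    (h : F =ᶠ[𝓝[≠] z] G) : F z = G z :=
  ((hF.eventuallyEq_nhds_iff_eventuallyEq_nhdsNE hG).1 h).eq_of_nhds

theorem glue {D : Set ℂ} (φ : ℂ → ℂ)
    (hφ : ∀ z₀ ∈ D, ∃ A : ℂ → ℂ, AnalyticAt ℂ A z₀ ∧ φ =ᶠ[𝓝[≠] z₀] A) (hD : IsOpen D) :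
    ∃ a : ℂ → ℂ, DifferentiableOn ℂ a D ∧ ∀ z₀ ∈ D, a =ᶠ[𝓝[≠] z₀] φ := by
  choose! A hA hA2 using hφ
  have key : ∀ z₀ ∈ D, ∀ᶠ z in 𝓝[≠] z₀, A z z = φ z := by
    intro z₀ hz₀
    have h1 := eventually_eventually_nhdsWithin.2 (hA2 z₀ hz₀)
    have h2 : ∀ᶠ z in 𝓝[≠] z₀, AnalyticAt ℂ (A z₀) z :=
      (hA z₀ hz₀).eventually_analyticAt.filter_mono nhdsWithin_le_nhds
    have h3 : ∀ᶠ z in 𝓝[≠] z₀, z ∈ D := mem_nhdsWithin_of_mem_nhds (hD.mem_nhds hz₀)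
    filter_upwards [h1, h2, h3, self_mem_nhdsWithin, hA2 z₀ hz₀] with z h1 h2 h3 h4 h5
    rw [h5]
    have h6 : φ =ᶠ[𝓝 z] A z₀ := by
      rw [IsOpen.nhdsWithin_eq isOpen_compl_singleton h4] at h1
      exact h1
    refine eq_of_punctured (hA z h3).continuousAt h2.continuousAt ?_
    exact (hA2 z h3).symm.trans (h6.filter_mono nhdsWithin_le_nhds)
  refine ⟨fun z => A z z, fun z₀ hz₀ => ?_, key⟩
  have h : (fun z => A z z) =ᶠ[𝓝 z₀] A z₀ := by
    have hk : (fun z => A z z) =ᶠ[𝓝[≠] z₀] φ := key z₀ hz₀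
    have := hk.trans (hA2 z₀ hz₀)
    rw [Filter.EventuallyEq, eventually_nhdsWithin_iff] at this
    filter_upwards [this] with z hz
    by_cases hzz : z = z₀
    · rw [hzz]
    · exact hz hzz
  exact (h.differentiableAt_iff.2 (hA z₀ hz₀).differentiableAt).differentiableWithinAt

theorem divide {D : Set ℂ} (hD : IsOpen D) {z₀ : ℂ} (hz₀ : z₀ ∈ D) {g : ℂ → ℂ}
    (hg : DifferentiableOn ℂ g D) (h0 : g z₀ = 0) :
    ∃ q : ℂ → ℂ, DifferentiableOn ℂ q D ∧ ∀ z, g z = (z - z₀) * q z := by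
  refine ⟨dslope g z₀, (Complex.differentiableOn_dslope (hD.mem_nhds hz₀)).2 hg, fun z => ?_⟩
  have := sub_smul_dslope g z₀ z
  rw [smul_eq_mul, h0, sub_zero] at this
  exact this.symm

theorem cop {D : Set ℂ} (hD : IsOpen D) {z₀ : ℂ} (hz₀ : z₀ ∈ D) {h : ℂ → ℂ}
    (hh : DifferentiableOn ℂ h D) (h0 : h z₀ ≠ 0) (n : ℕ) :
    ∃ c e : ℂ → ℂ, DifferentiableOn ℂ c D ∧ DifferentiableOn ℂ e D ∧
      ∀ z, 1 - h z * c z = (z - z₀) ^ n * e z := by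
  induction n with
  | zero => exact ⟨fun _ => 0, fun _ => 1, by fun_prop, by fun_prop, fun z => by simp⟩
  | succ n ih =>
    obtain ⟨c, e, hc, he, hce⟩ := ih
    obtain ⟨q, hq, hq2⟩ := divide hD hz₀ (g := fun z => e z - h z * (e z₀ / h z₀))
      (by fun_prop) (by field_simp; ring)
    refine ⟨fun z => c z + (e z₀ / h z₀) * (z - z₀) ^ n, q, by fun_prop, hq, fun z => ?_⟩
    rw [pow_succ, mul_assoc, ← hq2 z]
    linear_combination hce z

theorem zeros_finite {D : Set ℂ} (hD : IsOpen D) (hconn : IsPreconnected D) {f : ℂ → ℂ}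
    (hf : DifferentiableOn ℂ f D) (hf0 : ∃ z ∈ D, f z ≠ 0) (m : ℕ) :
    ({z ∈ D | f z = 0} ∩ KK D m).Finite := by
  by_contra hinf
  obtain ⟨x, hx, hacc⟩ := Set.Infinite.exists_accPt_of_subset_isCompact hinf (KK_compact D m)
    inter_subset_right
  have hfr := accPt_iff_frequently_nhdsNE.1 hacc
  obtain ⟨z, hz, hne⟩ := hf0
  refine hne ((hf.analyticOnNhd hD).eqOn_zero_of_preconnected_of_frequently_eq_zero hconn
    (KK_subset D m hx) (hfr.mono fun y hy => hy.1.2) hz)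

theorem zeros_countable {D : Set ℂ} (hD : IsOpen D) (hconn : IsPreconnected D) {f : ℂ → ℂ}
    (hf : DifferentiableOn ℂ f D) (hf0 : ∃ z ∈ D, f z ≠ 0) :
    {z ∈ D | f z = 0}.Countable := by
  refine (Set.countable_iUnion fun m : ℕ => (zeros_finite hD hconn hf hf0 m).countable).mono ?_
  intro z hz
  obtain ⟨m, hm⟩ := KK_nhds hD hz.1
  exact mem_iUnion.2 ⟨m, hz, mem_of_mem_nhds hm⟩

theorem factor {D : Set ℂ} (hD : IsOpen D) (hconn : IsPreconnected D) {f : ℂ → ℂ}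
    (hf : DifferentiableOn ℂ f D) (hf0 : ∃ z ∈ D, f z ≠ 0) {z₀ : ℂ} (hz₀ : z₀ ∈ D) :
    ∃ (n : ℕ) (g : ℂ → ℂ), DifferentiableOn ℂ g D ∧ g z₀ ≠ 0 ∧
      ∀ᶠ z in 𝓝[≠] z₀, f z = (z - z₀) ^ n * g z := by
  have han := hf.analyticAt (hD.mem_nhds hz₀)
  have hne : ¬ ∀ᶠ z in 𝓝 z₀, f z = 0 := by
    intro h
    obtain ⟨z, hz, hne⟩ := hf0
    exact hne ((hf.analyticOnNhd hD).eqOn_zero_of_preconnected_of_eventuallyEq_zero hconn hz₀ h hz)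
  obtain ⟨n, g, hg, hg0, hfg⟩ := han.exists_eventuallyEq_pow_smul_nonzero_iff.2 hne
  have hloc : (fun z => f z / (z - z₀) ^ n) =ᶠ[𝓝[≠] z₀] g := by
    filter_upwards [hfg.filter_mono nhdsWithin_le_nhds, self_mem_nhdsWithin] with z hz hzne
    have : z - z₀ ≠ 0 := sub_ne_zero.2 hzne
    rw [hz, smul_eq_mul]
    field_simp
  obtain ⟨a, ha, ha2⟩ := glue (D := D) (fun z => f z / (z - z₀) ^ n) (by
    intro w hw
    by_cases hwz : w = z₀
    · subst hwz
      exact ⟨g, hg, hloc⟩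
    · refine ⟨fun z => f z / (z - z₀) ^ n, ?_, EventuallyEq.rfl⟩
      have h1 := hf.analyticAt (hD.mem_nhds hw)
      have h3 : AnalyticAt ℂ (fun z : ℂ => (z - z₀) ^ n) w := by fun_prop
      have h4 : (fun z : ℂ => (z - z₀) ^ n) w ≠ 0 := pow_ne_zero _ (sub_ne_zero.2 hwz)
      exact h1.fun_div h3 h4) hD
  refine ⟨n, a, ha, ?_, ?_⟩
  · have := eq_of_punctured (ha.analyticAt (hD.mem_nhds hz₀)).continuousAt hg.continuousAt
      ((ha2 z₀ hz₀).trans hloc)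
    rwa [this]
  · filter_upwards [ha2 z₀ hz₀, self_mem_nhdsWithin] with z hz hzne
    have : z - z₀ ≠ 0 := sub_ne_zero.2 hzne
    rw [hz]
    field_simp

theorem bezout {D : Set ℂ} (hD : IsOpen D) (hconn : IsPreconnected D) {f h : ℂ → ℂ}
    (hf : DifferentiableOn ℂ f D) (hh : DifferentiableOn ℂ h D) (hf0 : ∃ z ∈ D, f z ≠ 0)
    (hno : ∀ z ∈ D, f z = 0 → h z ≠ 0) :
    ∃ a b : ℂ → ℂ, DifferentiableOn ℂ a D ∧ DifferentiableOn ℂ b D ∧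
      ∀ z ∈ D, a z * f z + b z * h z = 1 := by
  set Z : Set ℂ := {z ∈ D | f z = 0} with hZ
  choose! n g hg hg0 hfg using fun z₀ (hz₀ : z₀ ∈ D) => factor hD hconn hf hf0 hz₀
  choose! c e hc he hce using fun z₀ (hz₀ : z₀ ∈ Z) =>
    cop hD hz₀.1 (hh.fun_mul (hg z₀ hz₀.1)) (mul_ne_zero (hno z₀ hz₀.1 hz₀.2) (hg0 z₀ hz₀.1)) (n z₀)
  obtain ⟨u, hu⟩ := mittagLeffler hD Z (fun z hz => hz.1) (zeros_finite hD hconn hf hf0)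
    (zeros_countable hD hconn hf hf0) c hc n
  have han : ∀ {k : ℂ → ℂ}, DifferentiableOn ℂ k D → ∀ z ∈ D, AnalyticAt ℂ k z :=
    fun hk z hz => hk.analyticAt (hD.mem_nhds hz)
  obtain ⟨b, hb, hb2⟩ := glue (D := D) (fun z => f z * u z) (by
    intro z₀ hz₀
    obtain ⟨S, hS, hS1, hS2⟩ := hu z₀ hz₀
    by_cases hz : z₀ ∈ Z
    · refine ⟨fun z => g z₀ z * c z₀ z + f z * S z, ?_, ?_⟩
      · exact ((han (hg z₀ hz₀) z₀ hz₀).fun_mul (han (hc z₀ hz) z₀ hz₀)).fun_add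
          ((han hf z₀ hz₀).fun_mul hS)
      · filter_upwards [(hS2 hz).filter_mono nhdsWithin_le_nhds, hfg z₀ hz₀,
          self_mem_nhdsWithin] with z h1 h2 h3
        have h4 : z - z₀ ≠ 0 := sub_ne_zero.2 h3
        rw [h1, mul_add]
        congr 1
        rw [h2]
        field_simp
    · refine ⟨fun z => f z * S z, (han hf z₀ hz₀).fun_mul hS, ?_⟩
      filter_upwards [(hS1 hz).filter_mono nhdsWithin_le_nhds] with z h1
      rw [h1]) hD
  obtain ⟨a, ha, ha2⟩ := glue (D := D) (fun z => (f z)⁻¹ - h z * u z) (by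
    intro z₀ hz₀
    obtain ⟨S, hS, hS1, hS2⟩ := hu z₀ hz₀
    by_cases hz : z₀ ∈ Z
    · refine ⟨fun z => e z₀ z / g z₀ z - h z * S z, ?_, ?_⟩
      · exact ((han (he z₀ hz) z₀ hz₀).fun_div (han (hg z₀ hz₀) z₀ hz₀) (hg0 z₀ hz₀)).fun_sub
          ((han hh z₀ hz₀).fun_mul hS)
      · have hgne := (han (hg z₀ hz₀) z₀ hz₀).continuousAt.eventually_ne (hg0 z₀ hz₀)
        filter_upwards [(hS2 hz).filter_mono nhdsWithin_le_nhds, hfg z₀ hz₀,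
          hgne.filter_mono nhdsWithin_le_nhds, self_mem_nhdsWithin] with z h1 h2 h5 h3
        have h4 : z - z₀ ≠ 0 := sub_ne_zero.2 h3
        have h6 := hce z₀ hz z
        rw [h1, h2]
        field_simp
        linear_combination h6
    · have hfne : f z₀ ≠ 0 := fun h0 => hz ⟨hz₀, h0⟩
      refine ⟨fun z => (f z)⁻¹ - h z * S z,
        ((han hf z₀ hz₀).fun_inv hfne).fun_sub ((han hh z₀ hz₀).fun_mul hS), ?_⟩
      filter_upwards [(hS1 hz).filter_mono nhdsWithin_le_nhds] with z h1
      rw [h1]) hD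
  refine ⟨a, b, ha, hb, fun z₀ hz₀ => ?_⟩
  have hcont : ContinuousAt (fun z => a z * f z + b z * h z) z₀ :=
    (((han ha z₀ hz₀).fun_mul (han hf z₀ hz₀)).fun_add
      ((han hb z₀ hz₀).fun_mul (han hh z₀ hz₀))).continuousAt
  refine eq_of_punctured (F := fun z => a z * f z + b z * h z) (G := fun _ => 1) hcont continuousAt_const ?_
  have hgne := (han (hg z₀ hz₀) z₀ hz₀).continuousAt.eventually_ne (hg0 z₀ hz₀)
  filter_upwards [ha2 z₀ hz₀, hb2 z₀ hz₀, hfg z₀ hz₀, hgne.filter_mono nhdsWithin_le_nhds,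
    self_mem_nhdsWithin] with z h1 h2 h3 h4 h5
  have h6 : f z ≠ 0 := by
    rw [h3]
    exact mul_ne_zero (pow_ne_zero _ (sub_ne_zero.2 h5)) h4
  rw [h1, h2]
  field_simp
  ring

theorem exists_fg {R : Type*} [CommRing R] (M : Ideal R) (n : ℕ) :
    ∀ f ∈ M ^ n, ∃ s : Finset R, (s : Set R) ⊆ M ∧ f ∈ Ideal.span (s : Set R) ^ n := by
  classical
  have hmono : ∀ {s t : Finset R} (k : ℕ), s ⊆ t →
      Ideal.span (s : Set R) ^ k ≤ Ideal.span (t : Set R) ^ k := fun k h =>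
    Ideal.pow_right_mono (Ideal.span_mono (by exact_mod_cast h)) k
  induction n with
  | zero => exact fun f _ => ⟨∅, by simp, by simp⟩
  | succ n ih =>
    intro f hf
    rw [pow_succ] at hf
    refine Submodule.mul_induction_on hf ?_ ?_
    · intro x hx y hy
      obtain ⟨s, hs, hxs⟩ := ih x hx
      refine ⟨insert y s, ?_, ?_⟩
      · rw [Finset.coe_insert]
        exact Set.insert_subset hy hs
      · rw [pow_succ]
        refine Ideal.mul_mem_mul (hmono n (Finset.subset_insert _ _) hxs) (Ideal.subset_span ?_)
        simp
    · rintro x y ⟨s, hs, hx⟩ ⟨t, ht, hy⟩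
      refine ⟨s ∪ t, ?_, ?_⟩
      · rw [Finset.coe_union]
        exact Set.union_subset hs ht
      · exact Ideal.add_mem _ (hmono _ Finset.subset_union_left hx)
          (hmono _ Finset.subset_union_right hy)

/-- A generic combination avoids countably many common zeros. -/
theorem exists_generic {X : Type*} {k : ℕ} (g : Fin k → X → ℂ) (Z : Set X) (hZ : Z.Countable)
    (hno : ∀ z ∈ Z, ∃ i, g i z ≠ 0) : ∃ t : ℂ, ∀ z ∈ Z, ∑ i : Fin k, t ^ (i : ℕ) * g i z ≠ 0 := by
  classical
  let p : X → Polynomial ℂ := fun z => ∑ i : Fin k, Polynomial.monomial (i : ℕ) (g i z)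
  have hp : ∀ z ∈ Z, p z ≠ 0 := by
    intro z hz h0
    obtain ⟨i, hi⟩ := hno z hz
    apply hi
    have := congrArg (fun q => Polynomial.coeff q (i : ℕ)) h0
    simpa [p, Polynomial.finsetSum_coeff, Polynomial.coeff_monomial, Fin.val_inj] using this
  have hc : (⋃ z ∈ Z, {t : ℂ | (p z).IsRoot t}).Countable := by
    refine hZ.biUnion fun z hz => ?_
    exact (Polynomial.finite_setOfPred_isRoot (hp z hz)).countable
  have hne : (⋃ z ∈ Z, {t : ℂ | (p z).IsRoot t}) ≠ Set.univ := by
    intro h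
    rw [h] at hc
    exact not_countable_complex hc
  obtain ⟨t, ht⟩ := (Set.ne_univ_iff_exists_notMem _).1 hne
  refine ⟨t, fun z hz h0 => ht ?_⟩
  refine Set.mem_biUnion hz ?_
  change (p z).eval t = 0
  simp only [p, Polynomial.eval_finsetSum, Polynomial.eval_monomial]
  rw [← h0]
  exact Finset.sum_congr rfl fun i _ => mul_comm _ _

/-- Let `D` be a domain in `ℂ`, and `M` a free maximal ideal of `H(D)`. If
`f ∈ ki(M) = ⋂_{n=1}^∞ Mⁿ` and `f ≠ 0`, then `sup_{ζ ∈ Z_D(f)} ord(f,ζ) = ∞`: for every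
`n ∈ ℕ` there is a zero `ζ` of `f` of order at least `n`. -/
theorem sup_order_eq_infty_of_mem_ki {D : Set ℂ} (hD : IsOpen D) (hDconn : IsConnected D)
    (M : Ideal (Hol D)) (hM : M.IsMaximal)
    (hfree : (⋂ g ∈ M, ZD g) = (∅ : Set D))
    (f : Hol D) (hf : f ∈ ki M) (hf0 : f ≠ 0) :
    ∀ n : ℕ, ∃ ζ ∈ ZD f, ordGE f ζ n := by
  classical
  intro n
  have hfN : f ∈ M ^ (n + 1) := by
    have h1 := hf
    simp only [ki, Ideal.mem_iInf] at h1
    exact h1 (n + 1) (by omega)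
  obtain ⟨s, hsM, hfs⟩ := exists_fg M (n + 1) f hfN
  by_contra hcon
  push Not at hcon
  -- the elements of `s` have no common zero
  have hno : ∀ ζ : D, ∃ g ∈ s, (g : D → ℂ) ζ ≠ 0 := by
    intro ζ
    by_contra hall
    push Not at hall
    let X : Hol D := ⟨fun z => (z : ℂ) - ζ, fun z => z - ζ, by fun_prop, fun z => rfl⟩
    have hle : Ideal.span (s : Set (Hol D)) ≤ Ideal.span {X} := by
      rw [Ideal.span_le]
      intro g hg
      obtain ⟨G, hG, hGg⟩ := g.2
      obtain ⟨q, hq, hq2⟩ := divide hD ζ.2 hG (by rw [hGg]; exact hall g hg)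
      refine Ideal.mem_span_singleton'.2 ⟨⟨fun z => q z, q, hq, fun z => rfl⟩, ?_⟩
      apply Subtype.ext
      funext z
      have h2 := hq2 z
      rw [hGg] at h2
      change q z * ((z : ℂ) - ζ) = (g : D → ℂ) z
      rw [h2, mul_comm]
    have h3 := Ideal.pow_right_mono hle (n + 1) hfs
    rw [Ideal.span_singleton_pow, Ideal.mem_span_singleton'] at h3
    obtain ⟨q, hq⟩ := h3
    have h4 : ∀ z : D, (f : D → ℂ) z = (q : D → ℂ) z * ((z : ℂ) - ζ) ^ (n + 1) := by
      intro z
      rw [← hq]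
      rfl
    refine hcon ζ ?_ ⟨X * q, fun z => ?_⟩
    · change (f : D → ℂ) ζ = 0
      rw [h4]
      simp
    · rw [h4]
      change _ = _ * (((z : ℂ) - ζ) * (q : D → ℂ) z)
      ring
  obtain ⟨F, hF, hFf⟩ := f.2
  have hF0 : ∃ z ∈ D, F z ≠ 0 := by
    by_contra hall
    push Not at hall
    apply hf0
    apply Subtype.ext
    funext z
    rw [← hFf]
    exact hall z z.2
  let γ : Fin s.card → Hol D := fun i => (s.equivFin.symm i : Hol D)
  have hγM : ∀ i, γ i ∈ M := fun i => hsM (s.equivFin.symm i).2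
  choose G hG hGg using fun i => (γ i).2
  obtain ⟨t, ht⟩ := exists_generic G {z ∈ D | F z = 0}
    (zeros_countable hD hDconn.isPreconnected hF hF0) (by
      rintro z ⟨hz, -⟩
      obtain ⟨g, hg, hgz⟩ := hno ⟨z, hz⟩
      refine ⟨s.equivFin ⟨g, hg⟩, ?_⟩
      rw [hGg _ ⟨z, hz⟩]
      simpa [γ] using hgz)
  obtain ⟨a, b, ha, hb, hab⟩ := bezout hD hDconn.isPreconnected hF
    (h := fun z => ∑ i : Fin s.card, t ^ (i : ℕ) * G i z)
    (DifferentiableOn.fun_sum fun i _ => (hG i).const_mul _) hF0 (fun z hz h0 => ht z ⟨hz, h0⟩)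
  have hfM : f ∈ M := Ideal.pow_le_self (by omega) hfN
  have hhM : ∑ i : Fin s.card, algebraMap ℂ (Hol D) (t ^ (i : ℕ)) * γ i ∈ M :=
    M.sum_mem fun i _ => M.mul_mem_left _ (hγM i)
  let a' : Hol D := ⟨fun z => a z, a, ha, fun z => rfl⟩
  let b' : Hol D := ⟨fun z => b z, b, hb, fun z => rfl⟩
  apply hM.ne_top
  rw [Ideal.eq_top_iff_one]
  have h1 : (1 : Hol D) = a' * f + b' * ∑ i : Fin s.card, algebraMap ℂ (Hol D) (t ^ (i : ℕ)) * γ i := by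
    apply Subtype.ext
    funext z
    have h2 := hab z z.2
    rw [hFf] at h2
    simp only [hGg] at h2
    have h3 : ((∑ i : Fin s.card, algebraMap ℂ (Hol D) (t ^ (i : ℕ)) * γ i : Hol D) : D → ℂ) z =
        ∑ i : Fin s.card, t ^ (i : ℕ) * (γ i : D → ℂ) z := by
      rw [AddSubmonoidClass.coe_finsetSum, Finset.sum_apply]
      rfl
    change (1 : ℂ) = a z * (f : D → ℂ) z + b z * _
    rw [h3]
    exact h2.symm
  rw [h1]
  exact M.add_mem (M.mul_mem_left _ hfM) (M.mul_mem_left _ hhM)
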